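/- Let R be a Cohen-Macaulay commutative noetherian local ring of Krull dimension d, and let a be an element of R such that a·Ext_R^i(K,L) = 0 for all integers i > 0 and all modules K, L in CM_0(R). Then a^{2^{2d}(d+1)}·Ext_R^i(M,N) = 0 for all integers i > d and all finitely generated R-modules M and N. -/

import Mathlib

open CategoryTheory IsLocalRing

noncomputable section

/-- The `i`-th Tor module of two `R`-modules, as an object of `ModuleCat R`. -/
def TorMod (R : Type) [CommRing R] (i : ℕ) (M N : ModuleCat.{0} R) : ModuleCat.{0} R :=
  ((Tor (ModuleCat.{0} R) i).obj M).obj N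

/-- The `i`-th Ext module of two `R`-modules, as an object of `ModuleCat R`. -/
def ExtMod (R : Type) [CommRing R] (i : ℕ) (M N : ModuleCat.{0} R) : ModuleCat.{0} R :=
  ((Ext R (ModuleCat.{0} R) i).obj (Opposite.op M)).obj N

/-- Integer-indexed Tor: `Tor_n = 0` for `n < 0`. -/
def TorZ (R : Type) [CommRing R] (n : ℤ) (M N : ModuleCat.{0} R) : ModuleCat.{0} R :=
  if 0 ≤ n then TorMod R n.toNat M N else ModuleCat.of R PUnit

/-- Integer-indexed Ext: `Ext^n = 0` for `n < 0`. -/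
def ExtZ (R : Type) [CommRing R] (n : ℤ) (M N : ModuleCat.{0} R) : ModuleCat.{0} R :=
  if 0 ≤ n then ExtMod R n.toNat M N else ModuleCat.of R PUnit

/-- The depth of a module `N` over a local ring `S`, defined as the infimum of the set of
integers `i` such that `Ext^i(k, N) ≠ 0`, where `k` is the residue field of `S`
(`⊤` if no such `i` exists). -/
def moduleDepth (S : Type) [CommRing S] [IsLocalRing S] (N : Type) [AddCommGroup N]
    [Module S N] : ℕ∞ :=
  sInf {i : ℕ∞ | ∃ j : ℕ, i = (j : ℕ∞) ∧
    Nontrivial (ExtMod S j (ModuleCat.of S (ResidueField S)) (ModuleCat.of S N))}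

/-- A local ring is regular if it is noetherian and its maximal ideal can be generated by
(Krull dimension of `S`)-many elements. -/
def IsRegularLocal (S : Type) [CommRing S] [IsLocalRing S] : Prop :=
  IsNoetherianRing S ∧ ∃ s : Finset S, Ideal.span (s : Set S) = maximalIdeal S ∧
    (s.card : WithBot ℕ∞) = ringKrullDim S

/-- A local ring is Cohen-Macaulay if its depth (as a module over itself) equals its
Krull dimension. -/
def IsCMLocalRing (R : Type) [CommRing R] [IsLocalRing R] : Prop :=
  (moduleDepth R R : WithBot ℕ∞) = ringKrullDim R

/-- A module `M` over a local ring `R` is maximal Cohen-Macaulay if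
`depth M_p ≥ dim R_p` for every prime ideal `p` of `R`. -/
def IsMCMModule (R : Type) [CommRing R] [IsLocalRing R] (M : Type) [AddCommGroup M]
    [Module R M] : Prop :=
  ∀ (p : Ideal R) [p.IsPrime],
    ringKrullDim (Localization.AtPrime p) ≤
      (moduleDepth (Localization.AtPrime p) (LocalizedModule p.primeCompl M) : WithBot ℕ∞)

/-- Membership in `CM(R)`: finitely generated maximal Cohen-Macaulay modules. -/
def MemCM (R : Type) [CommRing R] [IsLocalRing R] (M : ModuleCat.{0} R) : Prop :=
  Module.Finite R M ∧ IsMCMModule R M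

/-- Membership in `CM₀(R)`: finitely generated maximal Cohen-Macaulay modules that are
locally free on the punctured spectrum. -/
def MemCM0 (R : Type) [CommRing R] [IsLocalRing R] (M : ModuleCat.{0} R) : Prop :=
  Module.Finite R M ∧ IsMCMModule R M ∧
    ∀ (p : Ideal R) [p.IsPrime], p ≠ maximalIdeal R →
      Module.Free (Localization.AtPrime p) (LocalizedModule p.primeCompl M)

/-- The singular locus of `R`: primes `p` such that `R_p` is not regular. -/
def singularLocus (R : Type) [CommRing R] : Set (PrimeSpectrum R) :=
  {p | ¬ IsRegularLocal (Localization.AtPrime p.asIdeal)}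

/-- The nonfree locus of a module `M`: primes `p` such that `M_p` is not a free
`R_p`-module. -/
def nonfreeLocus (R : Type) [CommRing R] (M : Type) [AddCommGroup M] [Module R M] :
    Set (PrimeSpectrum R) :=
  {p | ¬ Module.Free (Localization.AtPrime p.asIdeal)
        (LocalizedModule p.asIdeal.primeCompl M)}

/-- `K` is a first syzygy of `N` in a minimal free resolution: there is a surjection
`f : R^n → N` with `ker f ⊆ m·R^n` and `K ≅ ker f`. -/
def IsMinimalSyzygy1 (R : Type) [CommRing R] [IsLocalRing R] (N K : ModuleCat.{0} R) : Prop :=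
  ∃ (n : ℕ) (f : (Fin n → R) →ₗ[R] N), Function.Surjective f ∧
    LinearMap.ker f ≤ (maximalIdeal R) • (⊤ : Submodule R (Fin n → R)) ∧
    Nonempty (K ≃ₗ[R] LinearMap.ker f)

/-- `K` is a `d`-th syzygy of `N` in a minimal free resolution. -/
def IsMinimalSyzygy (R : Type) [CommRing R] [IsLocalRing R] :
    ℕ → ModuleCat.{0} R → ModuleCat.{0} R → Prop
  | 0, N, K => Nonempty ((K : Type) ≃ₗ[R] N)
  | d + 1, N, K => ∃ L : ModuleCat.{0} R, IsMinimalSyzygy1 R N L ∧ IsMinimalSyzygy R d L K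

/-- A module is indecomposable if it is nonzero and is not isomorphic to the direct sum of
two nonzero modules. -/
def IndecomposableModule (R : Type) [CommRing R] (M : Type) [AddCommGroup M] [Module R M] :
    Prop :=
  Nontrivial M ∧ ∀ (A B : Type) [AddCommGroup A] [Module R A] [AddCommGroup B] [Module R B],
    Nonempty (M ≃ₗ[R] A × B) → (Subsingleton A ∨ Subsingleton B)

/-!
If `x ∈ 𝔪` is regular on `N`, then by Krull's intersection theorem anything annihilating
`Ext^i(M, N / x^n N)` for all `n` annihilates `Ext^i(M, N)`; for arbitrary `x`, the module `N` is an
extension of one on which `x` is regular by one killed by a power of `x`. Along a system of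
parameters, `d` such steps reduce to `N` of finite length, each at the cost of squaring the
annihilator. The same reduction in `M` leaves two modules of finite length. Their `d`-th syzygies
lie in `CM₀(R)`: shifting along the syzygies of `N` costs one factor `a` per step, and shifting
along those of `M` lowers the cohomological degree. The exponent is thus `2^d · 2^d · (d + 1)`.

That a module of depth at least `d = dim R` is maximal Cohen-Macaulay at every prime follows from
Ischebeck's theorem, which bounds the grade of a prime from below.
-/

section Comparison

universe w

variable {R : Type*} [CommRing R] {C : Type*} [Category* C] [Abelian C] [Linear R C]
  [HasExt.{w} C] {X Y : C} (P : ProjectiveResolution X) {n : ℕ}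

lemma extMk_zero_eq_zero_iff (f : P.complex.X 0 ⟶ Y) (hf : P.complex.d 1 0 ≫ f = 0) :
    P.extMk f 1 rfl hf = 0 ↔ f = 0 := by
  refine ⟨fun h ↦ ?_, by rintro rfl; simp⟩
  have hclass := congrArg P.extEquivCohomologyClass h
  rw [P.extEquivCohomologyClass_extMk, P.extEquivCohomologyClass_zero,
    CochainComplex.HomComplex.CohomologyClass.mk_eq_zero_iff,
    CochainComplex.HomComplex.Cocycle.toSingleMk_mem_coboundaries_iff _ _ _ _ _ 1 (by simp)]
    at hclass
  obtain ⟨g, hg⟩ := hclass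
  have hg_zero : g = 0 := (P.cochainComplex.isZero_of_isStrictlyLE 0 1).eq_of_src _ _
  rw [hg_zero, Limits.comp_zero] at hg
  rw [← cancel_epi (P.cochainComplexXIso (-(0 : ℕ)) 0 rfl).hom, Limits.comp_zero]
  exact hg.symm

lemma extMk_eq_zero_iff_exists_prev (f : P.complex.X n ⟶ Y)
    (hf : P.complex.d (n + 1) n ≫ f = 0) :
    P.extMk f (n + 1) rfl hf = 0 ↔
      ∃ g : P.complex.X ((ComplexShape.up ℕ).prev n) ⟶ Y, P.complex.d n _ ≫ g = f := by
  cases n with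
  | zero =>
    rw [extMk_zero_eq_zero_iff, P.complex.shape 0 _ (by simp)]
    simp only [Limits.zero_comp, exists_const_iff, eq_comm]
    exact ⟨fun h ↦ ⟨⟨0⟩, h⟩, fun h ↦ h.2⟩
  | succ n => exact P.extMk_eq_zero_iff f _ rfl hf _ (by simp)

lemma smul_extMk (r : R) (f : P.complex.X n ⟶ Y) (hf : P.complex.d (n + 1) n ≫ f = 0) :
    r • P.extMk f (n + 1) rfl hf =
      P.extMk (r • f) (n + 1) rfl (by rw [Linear.comp_smul, hf, smul_zero]) := by
  rw [Abelian.Ext.smul_eq_comp_mk₀, ProjectiveResolution.extMk_comp_mk₀]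
  congr 1
  rw [Linear.comp_smul, Category.comp_id]

variable (R Y n) in
/-- The complex `Hom(P_{n-1}, Y) → Hom(P_n, Y) → Hom(P_{n+1}, Y)`, with the junk value
`P_{-1} = P_0` (and zero first map) for `n = 0`. -/
abbrev homShortComplex : ShortComplex (ModuleCat R) :=
  (P.complex.linearYonedaObj R Y).sc' ((ComplexShape.up ℕ).prev n) n (n + 1)

variable (R Y n) in
/-- The class in `Abelian.Ext X Y n` of an `n`-cocycle of `Hom(P, Y)`, where `P` is a projective
resolution of `X`. -/
def extMkLinearMap :
    LinearMap.ker (homShortComplex R Y P n).g.hom →ₗ[R] Abelian.Ext X Y n where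
  toFun f := P.extMk f.1 (n + 1) rfl f.2
  map_add' f g := (P.add_extMk f.1 g.1 (n + 1) rfl f.2 g.2).symm
  map_smul' r f := (smul_extMk P r f.1 f.2).symm

lemma extMkLinearMap_surjective : Function.Surjective (extMkLinearMap R Y P n) := fun x ↦
  let ⟨f, hf, hfx⟩ := P.extMk_surjective x (n + 1) rfl
  ⟨⟨f, hf⟩, hfx⟩

lemma ker_extMkLinearMap :
    LinearMap.ker (extMkLinearMap R Y P n) =
      LinearMap.range (homShortComplex R Y P n).moduleCatToCycles := by
  ext f
  refine (extMk_eq_zero_iff_exists_prev P f.1 f.2).trans ?_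
  exact ⟨fun ⟨g, hg⟩ ↦ ⟨g, Subtype.ext hg⟩, fun ⟨g, hg⟩ ↦ ⟨g, congrArg Subtype.val hg⟩⟩

variable (R X Y n) in
/-- The left derived functors of `Hom(-, Y)` compute `Ext` in the derived category, linearly. -/
def extLinearEquiv [EnoughProjectives C] :
    ((Ext R C n).obj (Opposite.op X)).obj Y ≃ₗ[R] Abelian.Ext X Y n :=
  let P := projectiveResolution X
  (P.isoExt n Y ≪≫ (P.complex.linearYonedaObj R Y).homologyIsoSc' _ n (n + 1) rfl (by simp) ≪≫
    (homShortComplex R Y P n).moduleCatHomologyIso).toLinearEquiv ≪≫ₗ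
  Submodule.quotEquivOfEq _ _ (ker_extMkLinearMap P).symm ≪≫ₗ
  (extMkLinearMap R Y P n).quotKerEquivOfSurjective (extMkLinearMap_surjective P)

end Comparison

lemma annihilator_extMod {R : Type} [CommRing R] (n : ℕ) (M N : ModuleCat.{0} R) :
    Module.annihilator R (ExtMod R n M N) = Module.annihilator R (Abelian.Ext M N n) :=
  (extLinearEquiv R M N n).annihilator_eq

lemma le_moduleDepth_iff {S : Type} [CommRing S] [IsLocalRing S] {N : Type} [AddCommGroup N]
    [Module S N] {n : ℕ} :
    n ≤ moduleDepth S N ↔ ∀ j < n, Subsingleton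
      (Abelian.Ext (ModuleCat.of S (ResidueField S)) (ModuleCat.of S N) j) := by
  have subsingleton_iff (j : ℕ) := (extLinearEquiv S (ModuleCat.of S (ResidueField S))
    (ModuleCat.of S N) j).toEquiv.subsingleton_congr
  rw [moduleDepth, le_sInf_iff]
  refine ⟨fun h j hj ↦ ?_, ?_⟩
  · rw [← subsingleton_iff, ← not_nontrivial_iff_subsingleton]
    exact fun hnontrivial ↦ hj.not_ge (by exact_mod_cast h j ⟨j, rfl, hnontrivial⟩)
  · rintro h _ ⟨j, rfl, hnontrivial⟩
    by_contra! hlt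
    exact not_nontrivial_iff_subsingleton.mpr
      ((subsingleton_iff j).mpr (h j (by exact_mod_cast hlt))) hnontrivial

section Annihilator

variable {R A B C : Type*} [CommRing R] [AddCommGroup A] [Module R A] [AddCommGroup B] [Module R B]
  [AddCommGroup C] [Module R C]

lemma annihilator_mul_annihilator_le_of_ker_le_range {f : A →ₗ[R] B} {g : B →ₗ[R] C}
    (h : LinearMap.ker g ≤ LinearMap.range f) :
    Module.annihilator R A * Module.annihilator R C ≤ Module.annihilator R B := by
  refine Ideal.mul_le.mpr fun r hr s hs ↦ Module.mem_annihilator.mpr fun b ↦ ?_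
  have hsb : s • b ∈ LinearMap.ker g := by
    rw [LinearMap.mem_ker, map_smul, Module.mem_annihilator.mp hs]
  obtain ⟨a, ha⟩ := h hsb
  rw [mul_smul, ← ha, ← map_smul, Module.mem_annihilator.mp hr, map_zero]

lemma iInf_annihilator_le_of_ker_le_range_pow_smul [IsNoetherianRing R] [Module.Finite R B]
    {x : R} (hx : x ∈ (⊥ : Ideal R).jacobson) {D : ℕ → Type*} [∀ n, AddCommGroup (D n)]
    [∀ n, Module R (D n)] (g : ∀ n, B →ₗ[R] D n)
    (hg : ∀ n, LinearMap.ker (g n) ≤ LinearMap.range (LinearMap.lsmul R B (x ^ (n + 1)))) :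
    ⨅ n, Module.annihilator R (D n) ≤ Module.annihilator R B := by
  refine fun r hr ↦ Module.mem_annihilator.mpr fun b ↦ ?_
  rw [Submodule.mem_iInf] at hr
  have krull := Ideal.iInf_pow_smul_eq_bot_of_le_jacobson (M := B) (Ideal.span {x})
    ((Ideal.span_singleton_le_iff_mem _).mpr hx)
  rw [← Submodule.mem_bot R, ← krull, Submodule.mem_iInf]
  intro n
  obtain ⟨b', hb'⟩ := hg n (x := r • b) (by
    rw [LinearMap.mem_ker, map_smul, Module.mem_annihilator.mp (hr n)])
  rw [← hb', LinearMap.lsmul_apply]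
  exact Submodule.smul_mem_smul (Ideal.pow_le_pow_right n.le_succ
    (Ideal.pow_mem_pow (Ideal.mem_span_singleton_self x) _)) trivial

end Annihilator

section ExactSequence

universe w

open Abelian.Ext

variable {R : Type*} [CommRing R] {C : Type*} [Category* C] [Abelian C] [Linear R C]
  [HasExt.{w} C]

lemma smul_eq_mk₀_comp {X Y : C} {i : ℕ} (r : R) (y : Abelian.Ext X Y i) :
    r • y = (mk₀ (r • 𝟙 X)).comp y (zero_add i) := by
  rw [mk₀_smul, smul_comp, mk₀_id_comp]

variable {S : ShortComplex C} (hS : S.ShortExact) (X : C) (i : ℕ)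
include hS

variable (R) in
lemma ker_postcomp_g_le_range_postcomp_f :
    LinearMap.ker ((mk₀ S.g).postcompOfLinear R X (add_zero i)) ≤
      LinearMap.range ((mk₀ S.f).postcompOfLinear R X (add_zero i)) :=
  fun y hy ↦ covariant_sequence_exact₂ X hS y hy

variable (R) in
lemma ker_precomp_extClass_le_range_precomp_f :
    LinearMap.ker (hS.extClass.precompOfLinear R X (add_comm 1 i)) ≤
      LinearMap.range ((mk₀ S.f).precompOfLinear R X (zero_add i)) :=
  fun y hy ↦ contravariant_sequence_exact₁ hS X y (add_comm 1 i) hy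

lemma annihilator_ext_X₁_mul_annihilator_ext_X₃_le :
    Module.annihilator R (Abelian.Ext X S.X₁ i) * Module.annihilator R (Abelian.Ext X S.X₃ i) ≤
      Module.annihilator R (Abelian.Ext X S.X₂ i) :=
  annihilator_mul_annihilator_le_of_ker_le_range (ker_postcomp_g_le_range_postcomp_f R hS X i)

lemma annihilator_ext_X₂_mul_annihilator_ext_X₁_succ_le :
    Module.annihilator R (Abelian.Ext X S.X₂ i) *
        Module.annihilator R (Abelian.Ext X S.X₁ (i + 1)) ≤
      Module.annihilator R (Abelian.Ext X S.X₃ i) :=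
  annihilator_mul_annihilator_le_of_ker_le_range
    (f := (mk₀ S.g).postcompOfLinear R X (add_zero i))
    (g := hS.extClass.postcompOfLinear R X rfl)
    fun y hy ↦ covariant_sequence_exact₃ X hS y rfl hy

lemma annihilator_X₃_ext_mul_annihilator_X₁_ext_le :
    Module.annihilator R (Abelian.Ext S.X₃ X i) * Module.annihilator R (Abelian.Ext S.X₁ X i) ≤
      Module.annihilator R (Abelian.Ext S.X₂ X i) :=
  annihilator_mul_annihilator_le_of_ker_le_range
    (f := (mk₀ S.g).precompOfLinear R X (zero_add i))
    (g := (mk₀ S.f).precompOfLinear R X (zero_add i))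
    fun y hy ↦ contravariant_sequence_exact₂ hS X y hy

lemma annihilator_X₁_ext_le_annihilator_X₃_ext_succ [Projective S.X₂] :
    Module.annihilator R (Abelian.Ext S.X₁ X i) ≤
      Module.annihilator R (Abelian.Ext S.X₃ X (i + 1)) :=
  (hS.extClass.precompOfLinear R X (add_comm 1 i)).annihilator_le_of_surjective
    fun y ↦ contravariant_sequence_exact₃ hS X y (eq_zero_of_projective _) (add_comm 1 i)

lemma subsingleton_X₂_ext [Subsingleton (Abelian.Ext S.X₁ X i)]
    [Subsingleton (Abelian.Ext S.X₃ X i)] : Subsingleton (Abelian.Ext S.X₂ X i) :=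
  subsingleton_of_forall_eq 0 fun y ↦ by
    obtain ⟨z, rfl⟩ := contravariant_sequence_exact₂ hS X y (Subsingleton.elim _ _)
    rw [Subsingleton.elim z 0, comp_zero]

lemma subsingleton_ext_X₁ [Subsingleton (Abelian.Ext X S.X₂ i)]
    (h : ∀ j < i, Subsingleton (Abelian.Ext X S.X₃ j)) :
    Subsingleton (Abelian.Ext X S.X₁ i) := by
  cases i with
  | zero =>
    have := hS.mono_f
    exact (postcomp_mk₀_injective_of_mono X S.f).subsingleton
  | succ i =>
    refine subsingleton_of_forall_eq 0 fun y ↦ ?_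
    obtain ⟨z, rfl⟩ := covariant_sequence_exact₁ X hS y (Subsingleton.elim _ _) rfl
    rw [(h i i.lt_succ_self).elim z 0, zero_comp]

end ExactSequence

section RegularElement

universe u v

variable {R : Type u} [CommRing R] [Small.{v} R] [IsNoetherianRing R] {x : R}
  (hx : x ∈ (⊥ : Ideal R).jacobson) (X Y : ModuleCat.{v} R) [Module.Finite R X] [Module.Finite R Y]
  (i : ℕ)
include hx

lemma iInf_annihilator_ext_quotSMulTop_le (reg : IsSMulRegular Y x) :
    ⨅ n, Module.annihilator R (Abelian.Ext X (ModuleCat.of R (QuotSMulTop (x ^ (n + 1)) Y)) i) ≤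
      Module.annihilator R (Abelian.Ext X Y i) := by
  have hS n := (reg.pow (n + 1)).smulShortComplex_shortExact (M := Y)
  refine iInf_annihilator_le_of_ker_le_range_pow_smul hx
    (fun n ↦ (Abelian.Ext.mk₀ (Y.smulShortComplex (x ^ (n + 1))).g).postcompOfLinear R X
      (add_zero i))
    fun n y hy ↦ ?_
  obtain ⟨z, rfl⟩ := ker_postcomp_g_le_range_postcomp_f R (hS n) X i hy
  exact ⟨z, z.smul_eq_comp_mk₀ _⟩

lemma iInf_annihilator_quotSMulTop_ext_succ_le (reg : IsSMulRegular X x) :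
    ⨅ n, Module.annihilator R
        (Abelian.Ext (ModuleCat.of R (QuotSMulTop (x ^ (n + 1)) X)) Y (i + 1)) ≤
      Module.annihilator R (Abelian.Ext X Y i) := by
  have hS n := (reg.pow (n + 1)).smulShortComplex_shortExact (M := X)
  refine iInf_annihilator_le_of_ker_le_range_pow_smul hx
    (fun n ↦ (hS n).extClass.precompOfLinear R Y (add_comm 1 i)) fun n y hy ↦ ?_
  obtain ⟨z, rfl⟩ := ker_precomp_extClass_le_range_precomp_f R (hS n) Y i hy
  exact ⟨z, smul_eq_mk₀_comp _ z⟩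

lemma subsingleton_ext_of_forall_subsingleton_quotSMulTop_ext_succ (reg : IsSMulRegular X x)
    (h : ∀ n, Subsingleton
      (Abelian.Ext (ModuleCat.of R (QuotSMulTop (x ^ (n + 1)) X)) Y (i + 1))) :
    Subsingleton (Abelian.Ext X Y i) := by
  simp_rw [← Module.annihilator_eq_top_iff (R := R)] at h ⊢
  exact top_le_iff.mp ((le_iInf fun n ↦ (h n).ge).trans
    (iInf_annihilator_quotSMulTop_ext_succ_le hx X Y i reg))

end RegularElement

section Devissage

lemma exists_mem_radical_annihilator_and_isSMulRegular_quotient {R : Type*} [CommRing R]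
    (N : Type*) [AddCommGroup N] [Module R N] [IsNoetherian R N] (x : R) :
    ∃ G : Submodule R N, x ∈ (Module.annihilator R G).radical ∧ IsSMulRegular (N ⧸ G) x := by
  let torsion : ℕ →o Submodule R N :=
    ⟨fun n ↦ Submodule.torsionBy R N (x ^ n), fun _ _ h ↦
      Submodule.torsionBy_le_torsionBy_of_dvd _ _ (pow_dvd_pow x h)⟩
  obtain ⟨n, hn⟩ := monotone_stabilizes_iff_noetherian.mpr ‹IsNoetherian R N› torsion
  refine ⟨torsion n, ⟨n, Module.mem_annihilator.mpr fun y ↦ Subtype.ext y.2⟩, ?_⟩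
  rw [isSMulRegular_quotient_iff_mem_of_smul_mem]
  intro y (hy : x ^ n • x • y = 0)
  rw [hn (n + 1) n.le_succ]
  change x ^ (n + 1) • y = 0
  rwa [pow_succ, mul_smul]

universe u v

variable {R : Type u} [CommRing R] [IsNoetherianRing R] {𝔮 : ModuleCat.{v} R → Ideal R}

lemma sq_le_of_forall_mem_radical_annihilator {N : ModuleCat.{v} R} [Module.Finite R N] {x : R}
    {J : Ideal R}
    (mul_le : ∀ S : ShortComplex (ModuleCat.{v} R), S.ShortExact → Module.Finite R S.X₂ →
      𝔮 S.X₁ * 𝔮 S.X₃ ≤ 𝔮 S.X₂)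
    (regular : ∀ N : ModuleCat.{v} R, Module.Finite R N → IsSMulRegular N x →
      ⨅ n, 𝔮 (ModuleCat.of R (QuotSMulTop (x ^ (n + 1)) N)) ≤ 𝔮 N)
    (h : ∀ L : ModuleCat.{v} R, Module.Finite R L → x ∈ (Module.annihilator R L).radical →
      Module.annihilator R N ≤ Module.annihilator R L → J ≤ 𝔮 L) : J ^ 2 ≤ 𝔮 N := by
  obtain ⟨G, hxG, reg⟩ := exists_mem_radical_annihilator_and_isSMulRegular_quotient N x
  have finite_quotient : Module.Finite R (N ⧸ G) := inferInstance
  have annihilator_le_quotient : Module.annihilator R N ≤ Module.annihilator R (N ⧸ G) :=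
    G.mkQ.annihilator_le_of_surjective G.mkQ_surjective
  have J_le_sub : J ≤ 𝔮 (ModuleCat.of R G) :=
    h _ (inferInstanceAs (Module.Finite R G)) hxG
      (G.subtype.annihilator_le_of_injective G.injective_subtype)
  have J_le_quotient : J ≤ 𝔮 (ModuleCat.of R (N ⧸ G)) := by
    refine (le_iInf fun n ↦ ?_).trans (regular _ finite_quotient reg)
    exact h _ (inferInstanceAs (Module.Finite R (QuotSMulTop (x ^ (n + 1)) (N ⧸ G))))
      ⟨n + 1, QuotSMulTop.mem_annihilator _ _⟩ (annihilator_le_quotient.trans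
        ((Submodule.mkQ _).annihilator_le_of_surjective (Submodule.mkQ_surjective _)))
  let S : ShortComplex (ModuleCat R) := ModuleCat.shortComplexOfCompEqZero G.subtype G.mkQ
    (LinearMap.exact_subtype_mkQ G).linearMap_comp_eq_zero
  have hS : S.ShortExact := ModuleCat.shortComplex_shortExact S (LinearMap.exact_subtype_mkQ G)
    G.injective_subtype G.mkQ_surjective
  have mul_le_S : 𝔮 (ModuleCat.of R G) * 𝔮 (ModuleCat.of R (N ⧸ G)) ≤ 𝔮 N := mul_le S hS ‹_›
  exact (sq J).trans_le ((Ideal.mul_mono J_le_sub J_le_quotient).trans mul_le_S)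

lemma pow_two_pow_length_le {l : List R}
    (mul_le : ∀ S : ShortComplex (ModuleCat.{v} R), S.ShortExact → Module.Finite R S.X₂ →
      𝔮 S.X₁ * 𝔮 S.X₃ ≤ 𝔮 S.X₂)
    (regular : ∀ x ∈ l, ∀ N : ModuleCat.{v} R, Module.Finite R N → IsSMulRegular N x →
      ⨅ n, 𝔮 (ModuleCat.of R (QuotSMulTop (x ^ (n + 1)) N)) ≤ 𝔮 N) {J : Ideal R}
    (h : ∀ N : ModuleCat.{v} R, Module.Finite R N →
      Ideal.ofList l ≤ (Module.annihilator R N).radical → J ≤ 𝔮 N)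
    (N : ModuleCat.{v} R) [Module.Finite R N] : J ^ 2 ^ l.length ≤ 𝔮 N := by
  induction l generalizing J N with
  | nil => simpa using h N ‹_› (by simp)
  | cons x l ih =>
    rw [List.length_cons, pow_succ', pow_mul]
    refine ih (fun y hy ↦ regular y (List.mem_cons_of_mem x hy)) (fun N _ hN ↦ ?_) N
    refine sq_le_of_forall_mem_radical_annihilator mul_le (regular x List.mem_cons_self)
      fun L hL hxL hNL ↦ h L hL ?_
    rw [Ideal.ofList_cons, sup_le_iff, Ideal.span_singleton_le_iff_mem]
    exact ⟨hxL, hN.trans (Ideal.radical_mono hNL)⟩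

end Devissage

section Ischebeck

universe u w

open Abelian.Ext

section IsZero

variable {C : Type*} [Category* C] [Abelian C] [HasExt.{w} C] {X Y Z : C} (i : ℕ)

lemma subsingleton_ext_of_isZero_left (hX : Limits.IsZero X) : Subsingleton (Abelian.Ext X Y i) :=
  subsingleton_of_forall_eq 0 fun y ↦ by
    rw [← mk₀_id_comp y, hX.eq_of_src (𝟙 X) 0, mk₀_zero, zero_comp]

lemma subsingleton_ext_of_isZero_right (hY : Limits.IsZero Y) : Subsingleton (Abelian.Ext X Y i) :=
  subsingleton_of_forall_eq 0 fun y ↦ by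
    rw [← comp_mk₀_id y, hY.eq_of_src (𝟙 Y) 0, mk₀_zero, comp_zero]

lemma subsingleton_ext_of_iso_left (e : X ≅ Z) [Subsingleton (Abelian.Ext X Y i)] :
    Subsingleton (Abelian.Ext Z Y i) :=
  subsingleton_of_forall_eq 0 fun y ↦ by
    rw [← mk₀_id_comp y, ← e.inv_hom_id, ← mk₀_comp_mk₀_assoc,
      Subsingleton.elim ((mk₀ e.hom).comp y (zero_add i)) 0, comp_zero]

end IsZero

lemma isSMulRegular_quotient_prime {R : Type*} [CommRing R] {p : Ideal R} [hp : p.IsPrime] {x : R}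
    (hx : x ∉ p) : IsSMulRegular (R ⧸ p) x :=
  (isSMulRegular_quotient_iff_mem_of_smul_mem p x).mpr
    fun _ hy ↦ (hp.mem_or_mem hy).resolve_left hx

variable {R : Type u} [CommRing R] [IsNoetherianRing R] [IsLocalRing R] {L : ModuleCat.{u} R}
  [Module.Finite R L] {t : ℕ}

lemma subsingleton_ext_of_supportDim_lt
    (h : ∀ j < t, Subsingleton (Abelian.Ext (ModuleCat.of R (ResidueField R)) L j)) {c i : ℕ}
    (hic : i + c ≤ t) (N : Type u) [AddCommGroup N] [Module R N] [hN : Module.Finite R N]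
    (hNc : Module.supportDim R N < c) : Subsingleton (Abelian.Ext (ModuleCat.of R N) L i) := by
  induction c generalizing i N with
  | zero =>
    have : Subsingleton N := by
      rw [← Module.supportDim_eq_bot_iff_subsingleton R]
      exact WithBot.lt_coe_bot.mp hNc
    exact subsingleton_ext_of_isZero_left i (ModuleCat.isZero_of_subsingleton _)
  | succ c ih =>
    induction hN using IsNoetherianRing.induction_on_isQuotientEquivQuotientPrime R with
    | subsingleton N => exact subsingleton_ext_of_isZero_left i (ModuleCat.isZero_of_subsingleton _)
    | exact N₁ N₂ N₃ f g hf hg hfg ih₁ ih₃ =>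
      have := ih₁ ((Module.supportDim_le_of_injective f hf).trans_lt hNc)
      have := ih₃ ((Module.supportDim_le_of_surjective g hg).trans_lt hNc)
      let S : ShortComplex (ModuleCat R) :=
        ModuleCat.shortComplexOfCompEqZero f g hfg.linearMap_comp_eq_zero
      have hS : S.ShortExact := ModuleCat.shortComplex_shortExact S hfg hf hg
      exact subsingleton_X₂_ext hS L i
    | quotient N p e =>
      rcases (le_maximalIdeal p.2.ne_top).eq_or_lt with hp | hp
      · have := h i (by lia)
        obtain rfl : p = closedPoint R := PrimeSpectrum.ext hp
        exact subsingleton_ext_of_iso_left i (X := ModuleCat.of R (ResidueField R))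
          e.symm.toModuleIso
      · obtain ⟨x, hxm, hxp⟩ := SetLike.exists_of_lt hp
        have hreg : IsSMulRegular N x :=
          (e.isSMulRegular_congr x).mpr (isSMulRegular_quotient_prime hxp)
        refine subsingleton_ext_of_forall_subsingleton_quotSMulTop_ext_succ
          (maximalIdeal_le_jacobson ⊥ hxm) (ModuleCat.of R N) L i hreg fun n ↦ ?_
        refine ih (by lia) (QuotSMulTop (x ^ (n + 1)) N) (lt_of_add_lt_add_right (a := 1) ?_)
        rwa [Module.supportDim_quotSMulTop_succ_eq_supportDim (hreg.pow _)
          (Ideal.pow_mem_of_mem _ hxm _ n.succ_pos)]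

end Ischebeck

section Depth

open RingTheory.Sequence

lemma support_quotient_eq_zeroLocus {R : Type*} [CommRing R] (I : Ideal R) :
    Module.support R (R ⧸ I) = PrimeSpectrum.zeroLocus I := by
  rw [Module.support_eq_zeroLocus, Ideal.annihilator_quotient]

lemma ideal_smul_top_lt_top_of_le_maximalIdeal {R M : Type*} [CommRing R] [IsLocalRing R]
    [AddCommGroup M] [Module R M] [Module.Finite R M] [Nontrivial M] {I : Ideal R}
    (hI : I ≤ maximalIdeal R) : I • (⊤ : Submodule R M) < ⊤ :=
  (Submodule.top_ne_ideal_smul_of_le_jacobson_annihilator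
    (hI.trans (maximalIdeal_le_jacobson _))).symm.lt_top

lemma height_add_supportDim_quotient_le_ringKrullDim {R : Type*} [CommRing R] (p : Ideal R)
    [hp : p.IsPrime] : p.height + Module.supportDim R (R ⧸ p) ≤ ringKrullDim R := by
  let P : PrimeSpectrum R := ⟨p, hp⟩
  have : Nonempty (PrimeSpectrum R) := ⟨P⟩
  have supportDim_eq : Module.supportDim R (R ⧸ p) = Order.coheight P := by
    rw [Module.supportDim, support_quotient_eq_zeroLocus, Order.coheight_eq_krullDim_Ici]
    rfl
  rw [supportDim_eq, PrimeSpectrum.height_eq_orderHeight P, ringKrullDim,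
    Order.krullDim_eq_iSup_height_add_coheight_of_nonempty, ← WithBot.coe_add,
    WithBot.coe_le_coe]
  exact le_iSup (fun q : PrimeSpectrum R ↦ Order.height q + Order.coheight q) P

lemma length_le_moduleDepth_of_isRegular {S N : Type} [CommRing S] [IsNoetherianRing S]
    [IsLocalRing S] [AddCommGroup N] [Module S N] [Module.Finite S N] {rs : List S}
    (reg : IsRegular N rs) (hrs : ∀ r ∈ rs, r ∈ maximalIdeal S) :
    rs.length ≤ moduleDepth S N := by
  have := reg.nontrivial
  exact le_moduleDepth_iff.mpr (ModuleCat.subsingleton_ext_of_exists_isRegular (maximalIdeal S)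
    (ModuleCat.of S (ResidueField S)) (support_quotient_eq_zeroLocus _).subset (ModuleCat.of S N)
    (ideal_smul_top_lt_top_of_le_maximalIdeal le_rfl) rs hrs reg)

lemma moduleDepth_eq_top_of_subsingleton {S N : Type} [CommRing S] [IsLocalRing S]
    [AddCommGroup N] [Module S N] [Subsingleton N] : moduleDepth S N = ⊤ :=
  ENat.eq_top_iff_forall_ge.mpr fun _ ↦ le_moduleDepth_iff.mpr fun j _ ↦
    subsingleton_ext_of_isZero_right j (ModuleCat.isZero_of_subsingleton _)

variable {R M : Type} [CommRing R] [IsNoetherianRing R] [IsLocalRing R] [AddCommGroup M]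
  [Module R M] [Module.Finite R M] {d : ℕ} (hd : ringKrullDim R ≤ d) (hM : d ≤ moduleDepth R M)
include hd hM

lemma exists_isRegular_length_eq_height [Nontrivial M] (p : Ideal R) [hp : p.IsPrime] :
    ∃ rs : List R, (rs.length : ℕ∞) = p.height ∧ (∀ r ∈ rs, r ∈ p) ∧ IsRegular M rs := by
  obtain ⟨n, hn⟩ := ENat.ne_top_iff_exists.mp (Ideal.height_ne_top_of_isPrime (I := p))
  have hnd : n ≤ d := by
    have := (Ideal.height_le_ringKrullDim_of_ne_top hp.ne_top).trans hd
    rw [← hn] at this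
    exact_mod_cast this
  have supportDim_lt (i : ℕ) (hi : i < n) : Module.supportDim R (R ⧸ p) < (d - i : ℕ) := by
    by_contra! hle
    have : (n + (d - i : ℕ) : WithBot ℕ∞) ≤ d := by
      refine le_trans ?_ ((height_add_supportDim_quotient_le_ringKrullDim p).trans hd)
      rw [← hn]
      exact add_le_add_right hle _
    have : n + (d - i) ≤ d := by exact_mod_cast this
    lia
  obtain ⟨rs, length_eq, hrs, reg⟩ := ModuleCat.exists_isRegular_of_exists_subsingleton_ext p n
    (ModuleCat.of R M) (ideal_smul_top_lt_top_of_le_maximalIdeal (le_maximalIdeal hp.ne_top))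
    (ModuleCat.of R (R ⧸ p)) (support_quotient_eq_zeroLocus p) fun i hi ↦
      subsingleton_ext_of_supportDim_lt (le_moduleDepth_iff.mp hM) (c := d - i) (by lia) (R ⧸ p)
        (supportDim_lt i hi)
  exact ⟨rs, by rw [length_eq, hn], hrs, reg⟩

theorem isMCMModule_of_ringKrullDim_le_moduleDepth : IsMCMModule R M := by
  intro p _
  rw [IsLocalization.AtPrime.ringKrullDim_eq_height p (Localization.AtPrime p), WithBot.coe_le_coe]
  rcases subsingleton_or_nontrivial (LocalizedModule p.primeCompl M) with _ | _
  · rw [moduleDepth_eq_top_of_subsingleton]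
    exact le_top
  · have : Nontrivial M := by
      by_contra! _
      exact not_subsingleton (LocalizedModule p.primeCompl M) inferInstance
    obtain ⟨rs, length_eq, hrs, reg⟩ := exists_isRegular_length_eq_height hd hM p
    have reg_loc := reg.toIsWeaklyRegular.isRegular_of_isLocalizedModule_of_mem
      (Localization.AtPrime p) p (LocalizedModule.mkLinearMap p.primeCompl M) hrs
    rw [← length_eq, ← List.length_map (algebraMap R (Localization.AtPrime p))]
    refine length_le_moduleDepth_of_isRegular reg_loc fun r hr ↦ ?_
    obtain ⟨s, hs, rfl⟩ := List.mem_map.mp hr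
    exact (IsLocalization.AtPrime.to_map_mem_maximal_iff _ p s).mpr (hrs s hs)

end Depth

section PuncturedSpectrum

open Abelian.Ext in
lemma subsingleton_ext_pi {R ι : Type} [CommRing R] [Finite ι] (X : ModuleCat.{0} R)
    (Y : ι → ModuleCat.{0} R) (i : ℕ) [∀ j, Subsingleton (Abelian.Ext X (Y j) i)] :
    Subsingleton (Abelian.Ext X (ModuleCat.of R (∀ j, Y j)) i) := by
  have := Fintype.ofFinite ι
  have := (addEquivBiproduct X (Limits.biproduct.isBilimit Y) i).injective.subsingleton
  let e := ModuleCat.biproductIsoPi Y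
  refine subsingleton_of_forall_eq 0 fun y ↦ ?_
  have comp_eq_zero : y.comp (mk₀ e.inv) (add_zero i) = 0 := this.elim _ _
  rw [← comp_mk₀_id y, ← e.inv_hom_id, ← mk₀_comp_mk₀, ← comp_assoc_of_second_deg_zero,
    comp_eq_zero, zero_comp]

lemma projective_of_exact_of_projective {R A B C : Type*} [CommRing R] [AddCommGroup A]
    [AddCommGroup B] [AddCommGroup C] [Module R A] [Module R B] [Module R C]
    [Module.Projective R B] [Module.Projective R C] {f : A →ₗ[R] B} {g : B →ₗ[R] C}
    (hf : Function.Injective f) (hfg : Function.Exact f g) (hg : Function.Surjective g) :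
    Module.Projective R A := by
  obtain ⟨s, hs⟩ := Module.projective_lifting_property g LinearMap.id hg
  have split_iff := hfg.split_tfae'.out 0 1
  obtain ⟨_, r, hr⟩ := split_iff.mp ⟨hf, s, hs⟩
  exact Module.Projective.of_split f r hr

lemma free_localizedModule_ker {R F X : Type*} [CommRing R] [IsNoetherianRing R] [AddCommGroup F]
    [Module R F] [Module.Free R F] [Module.Finite R F] [AddCommGroup X] [Module R X]
    {f : F →ₗ[R] X} (hf : Function.Surjective f) (p : Ideal R) [p.IsPrime]
    [Module.Free (Localization.AtPrime p) (LocalizedModule p.primeCompl X)] :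
    Module.Free (Localization.AtPrime p) (LocalizedModule p.primeCompl (LinearMap.ker f)) := by
  let S := p.primeCompl
  have : Module.Free (Localization.AtPrime p) (LocalizedModule S F) :=
    Module.free_of_isLocalizedModule (S := S) (LocalizedModule.mkLinearMap S F)
  have : Module.Projective (Localization.AtPrime p) (LocalizedModule S (LinearMap.ker f)) :=
    projective_of_exact_of_projective
      (f := LocalizedModule.map S (LinearMap.ker f).subtype) (g := LocalizedModule.map S f)
      (LocalizedModule.map_injective S _ (LinearMap.ker f).injective_subtype)
      (LocalizedModule.map_exact S _ f (LinearMap.exact_subtype_ker_map f))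
      (LocalizedModule.map_surjective S f hf)
  exact Module.free_of_flat_of_isLocalRing

/-- Finitely generated modules over a local ring that are locally free on the punctured spectrum
and have depth at least `t`: for `t = 0` they include the modules of finite length, for `t = dim R`
they are the modules in `CM₀(R)`, and taking syzygies raises `t` by one. -/
structure PuncturedFreeOfDepthGE (R : Type) [CommRing R] [IsLocalRing R] (t : ℕ) (X : Type)
    [AddCommGroup X] [Module R X] : Prop where
  finite : Module.Finite R X
  free (p : Ideal R) [p.IsPrime] (hp : p ≠ maximalIdeal R) :
    Module.Free (Localization.AtPrime p) (LocalizedModule p.primeCompl X)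
  le_moduleDepth : t ≤ moduleDepth R X

namespace PuncturedFreeOfDepthGE

variable {R X : Type} [CommRing R] [IsLocalRing R] [AddCommGroup X] [Module R X] {d t : ℕ}

lemma of_maximalIdeal_le_radical_annihilator [Module.Finite R X]
    (h : maximalIdeal R ≤ (Module.annihilator R X).radical) : PuncturedFreeOfDepthGE R 0 X where
  finite := ‹_›
  free p hp hpm := by
    obtain ⟨x, hxm, hxp⟩ := SetLike.exists_of_lt ((le_maximalIdeal hp.ne_top).lt_of_ne hpm)
    obtain ⟨n, hn⟩ := h hxm
    have : Subsingleton (LocalizedModule p.primeCompl X) :=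
      LocalizedModule.subsingleton_iff.mpr fun y ↦
        ⟨x ^ n, Submonoid.pow_mem p.primeCompl hxp n, Module.mem_annihilator.mp hn y⟩
    infer_instance
  le_moduleDepth := zero_le

lemma pi (hR : t ≤ moduleDepth R R) (n : ℕ) : PuncturedFreeOfDepthGE R t (Fin n → R) where
  finite := inferInstance
  free p _ _ := Module.free_of_isLocalizedModule (S := p.primeCompl)
    (LocalizedModule.mkLinearMap p.primeCompl (Fin n → R))
  le_moduleDepth := le_moduleDepth_iff.mpr fun j hj ↦ by
    have := le_moduleDepth_iff.mp hR j hj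
    exact subsingleton_ext_pi _ (fun _ ↦ ModuleCat.of R R) j

variable [IsNoetherianRing R]

lemma ker (hR : t < moduleDepth R R) (hX : PuncturedFreeOfDepthGE R t X) {n : ℕ}
    {f : (Fin n → R) →ₗ[R] X} (hf : Function.Surjective f) :
    PuncturedFreeOfDepthGE R (t + 1) (LinearMap.ker f) where
  finite := inferInstance
  free p _ hpm := by
    have := hX.free p hpm
    exact free_localizedModule_ker hf p
  le_moduleDepth := le_moduleDepth_iff.mpr fun j hj ↦ by
    have depth_pi : (t + 1 : ℕ) ≤ moduleDepth R (Fin n → R) :=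
      (pi (Order.add_one_le_of_lt hR) n).le_moduleDepth
    have := le_moduleDepth_iff.mp depth_pi j hj
    exact subsingleton_ext_X₁ (LinearMap.shortExact_shortComplexKer hf) _ j fun k hk ↦
      le_moduleDepth_iff.mp hX.le_moduleDepth k (by lia)

lemma memCM0 (hd : ringKrullDim R ≤ d) (hX : PuncturedFreeOfDepthGE R d X) :
    MemCM0 R (ModuleCat.of R X) :=
  have := hX.finite
  ⟨hX.finite, isMCMModule_of_ringKrullDim_le_moduleDepth hd hX.le_moduleDepth, hX.free⟩

end PuncturedFreeOfDepthGE

end PuncturedSpectrum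

section CohenMacaulay

variable {R : Type} [CommRing R] [IsNoetherianRing R] [IsLocalRing R] {d : ℕ}

lemma exists_list_length_eq_ringKrullDim_and_maximalIdeal_eq_radical
    (hd : ringKrullDim R = d) :
    ∃ l : List R, l.length = d ∧ maximalIdeal R = (Ideal.ofList l).radical := by
  obtain ⟨s, hs, hcard⟩ := Ideal.exists_finset_card_eq_height_of_isNoetherianRing (maximalIdeal R)
  have span_eq : Ideal.ofList s.toList = Ideal.span (s : Set R) := by simp [Ideal.ofList]
  refine ⟨s.toList, ?_, le_antisymm ?_ ?_⟩
  · have height_eq := maximalIdeal_height_eq_ringKrullDim (R := R)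
    rw [hd, ← hcard] at height_eq
    rw [Finset.length_toList]
    exact_mod_cast height_eq
  · rw [span_eq, Ideal.radical_eq_sInf]
    exact le_sInf fun p ⟨hsp, hp⟩ ↦ hs.2 ⟨hp, hsp⟩ (le_maximalIdeal hp.ne_top)
  · rw [span_eq, hs.1.1.radical_le_iff]
    exact hs.1.2

lemma pow_succ_le_annihilator_ext {J : Ideal R} (hdim : ringKrullDim R ≤ d)
    (hdepth : d ≤ moduleDepth R R) {K : ModuleCat.{0} R}
    (h : ∀ i > 0, ∀ L, MemCM0 R L → J ≤ Module.annihilator R (Abelian.Ext K L i))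
    {s t : ℕ} (hst : t + s = d) {L : Type} [AddCommGroup L] [Module R L]
    (hL : PuncturedFreeOfDepthGE R t L) {i : ℕ} (hi : 0 < i) :
    J ^ (s + 1) ≤ Module.annihilator R (Abelian.Ext K (ModuleCat.of R L) i) := by
  induction s generalizing t L i with
  | zero =>
    obtain rfl : t = d := hst
    simpa using h i hi _ (hL.memCM0 hdim)
  | succ s ih =>
    have := hL.finite
    obtain ⟨n, f, hf⟩ := Module.Finite.exists_fin' R L
    have ht : t < moduleDepth R R := lt_of_lt_of_le (by norm_cast; lia) hdepth
    have J_le_free := h i hi _ ((PuncturedFreeOfDepthGE.pi hdepth n).memCM0 hdim)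
    have pow_le_ker := ih (by lia) (hL.ker ht hf) i.succ_pos
    rw [pow_succ']
    exact (Ideal.mul_mono J_le_free pow_le_ker).trans
      (annihilator_ext_X₂_mul_annihilator_ext_X₁_succ_le
        (LinearMap.shortExact_shortComplexKer hf) K i)

lemma le_annihilator_ext_of_lt {J : Ideal R} (hdim : ringKrullDim R ≤ d)
    (hdepth : d ≤ moduleDepth R R) {L : ModuleCat.{0} R}
    (h : ∀ i > 0, ∀ K, MemCM0 R K → J ≤ Module.annihilator R (Abelian.Ext K L i))
    {s t : ℕ} (hst : t + s = d) {K : Type} [AddCommGroup K] [Module R K]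
    (hK : PuncturedFreeOfDepthGE R t K) {i : ℕ} (hi : s < i) :
    J ≤ Module.annihilator R (Abelian.Ext (ModuleCat.of R K) L i) := by
  induction s generalizing t K i with
  | zero =>
    obtain rfl : t = d := hst
    exact h i hi _ (hK.memCM0 hdim)
  | succ s ih =>
    have := hK.finite
    obtain ⟨n, f, hf⟩ := Module.Finite.exists_fin' R K
    obtain ⟨i, rfl⟩ := Nat.exists_eq_succ_of_ne_zero (Nat.ne_zero_of_lt hi)
    have ht : t < moduleDepth R R := lt_of_lt_of_le (by norm_cast; lia) hdepth
    have J_le_ker := ih (by lia) (hK.ker ht hf) (Nat.succ_lt_succ_iff.mp hi)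
    have : Projective f.shortComplexKer.X₂ :=
      (IsProjective.iff_projective (R := R) (Fin n → R)).mp inferInstance
    exact J_le_ker.trans (annihilator_X₁_ext_le_annihilator_X₃_ext_succ
      (LinearMap.shortExact_shortComplexKer hf) L i)

lemma pow_succ_le_annihilator_ext_of_maximalIdeal_le_radical {J : Ideal R}
    (hdim : ringKrullDim R ≤ d) (hdepth : d ≤ moduleDepth R R)
    (h : ∀ i > 0, ∀ K L, MemCM0 R K → MemCM0 R L → J ≤ Module.annihilator R (Abelian.Ext K L i))
    (M N : ModuleCat.{0} R) [Module.Finite R M] [Module.Finite R N]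
    (hM : maximalIdeal R ≤ (Module.annihilator R M).radical)
    (hN : maximalIdeal R ≤ (Module.annihilator R N).radical) {i : ℕ} (hi : d < i) :
    J ^ (d + 1) ≤ Module.annihilator R (Abelian.Ext M N i) :=
  le_annihilator_ext_of_lt hdim hdepth
    (fun _ hj K hK ↦ pow_succ_le_annihilator_ext hdim hdepth (fun k hk L ↦ h k hk K L hK)
      (zero_add d) (.of_maximalIdeal_le_radical_annihilator hN) hj)
    (zero_add d) (.of_maximalIdeal_le_radical_annihilator hM) hi

lemma pow_two_pow_length_le_annihilator_ext_right {l : List R}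
    (hl : ∀ x ∈ l, x ∈ maximalIdeal R) {J : Ideal R} (M : ModuleCat.{0} R) [Module.Finite R M]
    {i : ℕ}
    (h : ∀ N : ModuleCat.{0} R, Module.Finite R N →
      Ideal.ofList l ≤ (Module.annihilator R N).radical →
        J ≤ Module.annihilator R (Abelian.Ext M N i))
    (N : ModuleCat.{0} R) [Module.Finite R N] :
    J ^ 2 ^ l.length ≤ Module.annihilator R (Abelian.Ext M N i) :=
  pow_two_pow_length_le (𝔮 := fun N ↦ Module.annihilator R (Abelian.Ext M N i))
    (fun _ hS _ ↦ annihilator_ext_X₁_mul_annihilator_ext_X₃_le hS M i)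
    (fun x hx N _ reg ↦ iInf_annihilator_ext_quotSMulTop_le
      (maximalIdeal_le_jacobson ⊥ (hl x hx)) M N i reg)
    h N

lemma pow_two_pow_length_le_annihilator_ext_left {l : List R}
    (hl : ∀ x ∈ l, x ∈ maximalIdeal R) {J : Ideal R} (N : ModuleCat.{0} R) [Module.Finite R N]
    (h : ∀ M : ModuleCat.{0} R, Module.Finite R M →
      Ideal.ofList l ≤ (Module.annihilator R M).radical →
        ∀ i > d, J ≤ Module.annihilator R (Abelian.Ext M N i))
    (M : ModuleCat.{0} R) [Module.Finite R M] {i : ℕ} (hi : d < i) :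
    J ^ 2 ^ l.length ≤ Module.annihilator R (Abelian.Ext M N i) := by
  refine (pow_two_pow_length_le
    (𝔮 := fun M ↦ ⨅ i > d, Module.annihilator R (Abelian.Ext M N i)) ?_ ?_
    (fun M hM hlM ↦ le_iInf₂ (h M hM hlM)) M).trans (iInf₂_le i hi)
  · intro S hS _
    refine le_iInf₂ fun i hi ↦ ?_
    rw [mul_comm]
    exact (Ideal.mul_mono (iInf₂_le i hi) (iInf₂_le i hi)).trans
      (annihilator_X₃_ext_mul_annihilator_X₁_ext_le hS N i)
  -- Passing to `M / xM` raises the degree by one, so all degrees are treated at once.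
  · intro x hx M _ reg
    refine le_iInf₂ fun i hi ↦ ?_
    exact (iInf_mono fun n ↦ iInf₂_le (i + 1) (Nat.lt_succ_of_lt hi)).trans
      (iInf_annihilator_quotSMulTop_ext_succ_le (maximalIdeal_le_jacobson ⊥ (hl x hx)) M N i reg)

theorem pow_le_annihilator_ext {J : Ideal R} (hd : ringKrullDim R = d)
    (hdepth : d ≤ moduleDepth R R)
    (h : ∀ i > 0, ∀ K L, MemCM0 R K → MemCM0 R L → J ≤ Module.annihilator R (Abelian.Ext K L i))
    (M N : ModuleCat.{0} R) [Module.Finite R M] [Module.Finite R N] {i : ℕ} (hi : d < i) :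
    J ^ (2 ^ (2 * d) * (d + 1)) ≤ Module.annihilator R (Abelian.Ext M N i) := by
  obtain ⟨l, hlen, hrad⟩ := exists_list_length_eq_ringKrullDim_and_maximalIdeal_eq_radical hd
  have mem_maximalIdeal : ∀ x ∈ l, x ∈ maximalIdeal R := fun x hx ↦
    hrad ▸ Ideal.le_radical (Ideal.subset_span hx)
  have maximalIdeal_le {X : ModuleCat.{0} R}
      (hX : Ideal.ofList l ≤ (Module.annihilator R X).radical) :
      maximalIdeal R ≤ (Module.annihilator R X).radical :=
    hrad.trans_le (Ideal.radical_le_radical_iff.mpr hX)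
  have pow_eq : J ^ (2 ^ (2 * d) * (d + 1)) = ((J ^ (d + 1)) ^ 2 ^ l.length) ^ 2 ^ l.length := by
    rw [hlen]
    ring
  rw [pow_eq]
  refine pow_two_pow_length_le_annihilator_ext_left mem_maximalIdeal N (fun M _ hM j hj ↦ ?_) M hi
  refine pow_two_pow_length_le_annihilator_ext_right mem_maximalIdeal M (fun N _ hN ↦ ?_) N
  exact pow_succ_le_annihilator_ext_of_maximalIdeal_le_radical hd.le hdepth h M N
    (maximalIdeal_le hM) (maximalIdeal_le hN) hj

end CohenMacaulay

/-- Let `R` be a Cohen-Macaulay noetherian local ring of Krull dimension `d`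
and let `a ∈ R` annihilate `Ext^i(K,L)` for all `i > 0` and all `K, L ∈ CM₀(R)`. Then
`a^(2^(2d)·(d+1)) · Ext^i(M,N) = 0` for all `i > d` and all finitely generated `M, N`. -/
theorem stmt6 (R : Type) [CommRing R] [IsNoetherianRing R] [IsLocalRing R]
    (hCM : IsCMLocalRing R) (d : ℕ) (hd : ringKrullDim R = (d : WithBot ℕ∞)) (a : R)
    (h : ∀ i : ℕ, 0 < i → ∀ K L : ModuleCat.{0} R, MemCM0 R K → MemCM0 R L →
        ∀ x : ExtMod R i K L, a • x = 0) :
    ∀ i : ℕ, d < i → ∀ M N : ModuleCat.{0} R, Module.Finite R M → Module.Finite R N →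
      ∀ x : ExtMod R i M N, (a ^ (2 ^ (2 * d) * (d + 1))) • x = 0 := by
  have depth_eq : moduleDepth R R = d := WithBot.coe_inj.mp (hCM.trans hd)
  have span_le_annihilator : ∀ i > 0, ∀ K L, MemCM0 R K → MemCM0 R L →
      Ideal.span {a} ≤ Module.annihilator R (Abelian.Ext K L i) := fun i hi K L hK hL ↦ by
    rw [Ideal.span_singleton_le_iff_mem, ← annihilator_extMod, Module.mem_annihilator]
    exact h i hi K L hK hL
  intro i hi M N _ _
  have span_pow_le_annihilator := pow_le_annihilator_ext hd depth_eq.ge span_le_annihilator M N hi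
  rwa [Ideal.span_singleton_pow, Ideal.span_singleton_le_iff_mem, ← annihilator_extMod,
    Module.mem_annihilator] at span_pow_le_annihilator

end
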